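/- Let G = A * B be the free product of two nontrivial groups, and let H ≤ G be a finitely generated subgroup containing a nontrivial normal subgroup of G. Then H has finite index in G. -/

import Mathlib

open scoped Monoid.Coprod

namespace BaumslagAux

open Monoid

section
variable {ι : Type*} {M : ι → Type*} [∀ i, Group (M i)]

/-- A list of letters is a reduced word. -/
def Red (l : List (Σ i, M i)) : Prop :=
  (∀ x ∈ l, x.2 ≠ 1) ∧ l.IsChain fun x y => x.1 ≠ y.1

/-- The element of the free product represented by a list of letters. -/
def lp (l : List (Σ i, M i)) : CoprodI M := (l.map fun x => CoprodI.of x.2).prod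

@[simp] theorem lp_nil : lp ([] : List (Σ i, M i)) = 1 := rfl

@[simp] theorem lp_cons (x : Σ i, M i) (l) : lp (x :: l) = CoprodI.of x.2 * lp l := by
  simp [lp]

@[simp] theorem lp_append (l l' : List (Σ i, M i)) : lp (l ++ l') = lp l * lp l' := by
  simp [lp]

theorem exists_red (g : CoprodI M) : ∃ l, Red l ∧ lp l = g := by
  classical
  obtain ⟨w, rfl⟩ := (CoprodI.Word.equiv (M := M)).symm.surjective g
  exact ⟨w.toList, ⟨w.ne_one, w.chain_ne⟩, rfl⟩

theorem red_inj {l l' : List (Σ i, M i)} (h : Red l) (h' : Red l') (e : lp l = lp l') :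
    l = l' := by
  classical
  have := (CoprodI.Word.equiv (M := M)).symm.injective
    (a₁ := ⟨l, h.1, h.2⟩) (a₂ := ⟨l', h'.1, h'.2⟩) e
  exact congrArg CoprodI.Word.toList this

/-- `p` is represented by a prefix of the reduced word of `g`. -/
def IsPre (p g : CoprodI M) : Prop :=
  ∃ l₁ l₂ : List (Σ i, M i), Red (l₁ ++ l₂) ∧ lp l₁ = p ∧ lp (l₁ ++ l₂) = g

theorem isPre_letter {i : ι} (m : M i) (p g : CoprodI M)
    (h : IsPre p (CoprodI.of m * g)) : p = 1 ∨ IsPre (CoprodI.of m⁻¹ * p) g := by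
  obtain ⟨l₁, l₂, hr, hp, hg⟩ := h
  have hg' : g = CoprodI.of m⁻¹ * lp (l₁ ++ l₂) := by
    rw [hg, ← mul_assoc, ← map_mul]; simp
  by_cases hm : m = 1
  · subst hm
    right
    exact ⟨l₁, l₂, hr, by simp [hp], by simpa using hg⟩
  cases l₁ with
  | nil => left; simpa using hp.symm
  | cons a t =>
    right
    obtain ⟨j, x⟩ := a
    by_cases hij : i = j
    · subst hij
      by_cases hy : m⁻¹ * x = 1
      · refine ⟨t, l₂, ⟨fun y hy => hr.1 y (by simp_all), ?_⟩, ?_, ?_⟩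
        · have := hr.2
          rw [List.cons_append] at this
          exact this.of_cons
        · rw [← hp, lp_cons, ← mul_assoc, ← map_mul]
          simp [hy]
        · rw [hg', List.cons_append, lp_cons, ← mul_assoc, ← map_mul]
          simp [hy]
      · refine ⟨⟨i, m⁻¹ * x⟩ :: t, l₂, ⟨?_, ?_⟩, ?_, ?_⟩
        · intro y hy'
          rw [List.cons_append, List.mem_cons] at hy'
          rcases hy' with rfl | hy'
          · exact hy
          · exact hr.1 y (by rw [List.cons_append]; exact List.mem_cons_of_mem _ hy')
        · have := hr.2
          rw [List.cons_append, List.isChain_cons] at this ⊢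
          exact this
        · rw [← hp]; simp [mul_assoc]
        · rw [hg']; simp [mul_assoc]
    · refine ⟨⟨i, m⁻¹⟩ :: ⟨j, x⟩ :: t, l₂, ⟨?_, ?_⟩, ?_, ?_⟩
      · intro y hy'
        rw [List.cons_append, List.mem_cons] at hy'
        rcases hy' with rfl | hy'
        · simpa using hm
        · exact hr.1 y hy'
      · have := hr.2
        rw [List.cons_append] at this
        rw [List.cons_append, List.cons_append, List.isChain_cons_cons]
        exact ⟨hij, this⟩
      · rw [← hp]; simp
      · rw [hg']; simp

theorem isPre_mul (s : CoprodI M) : ∃ F : Set (CoprodI M), F.Finite ∧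
    ∀ p g, IsPre p (s * g) → p ∈ F ∨ IsPre (s⁻¹ * p) g := by
  induction s using CoprodI.induction_on with
  | one => exact ⟨∅, Set.finite_empty, fun p g h => Or.inr (by simpa using h)⟩
  | of i m =>
    refine ⟨{1}, Set.finite_singleton _, fun p g h => ?_⟩
    have := isPre_letter m p g h
    rwa [map_inv] at this
  | mul s t hs ht =>
    obtain ⟨F, hF, hs⟩ := hs
    obtain ⟨F', hF', ht⟩ := ht
    refine ⟨F ∪ (fun x => s * x) '' F', hF.union (hF'.image _), fun p g h => ?_⟩
    rw [mul_assoc] at h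
    rcases hs _ _ h with h | h
    · exact Or.inl (Or.inl h)
    rcases ht _ _ h with h | h
    · exact Or.inl (Or.inr ⟨_, h, by simp⟩)
    · right
      simpa [mul_assoc] using h

theorem isPre_subgroup (H : Subgroup (CoprodI M)) (hH : H.FG) :
    ∃ F : Set (CoprodI M), F.Finite ∧ ∀ h ∈ H, ∀ p g, IsPre p (h * g) →
      (∃ k ∈ H, k * p ∈ F) ∨ IsPre (h⁻¹ * p) g := by
  obtain ⟨S, rfl⟩ := hH
  choose F hF hs using isPre_mul (M := M)
  refine ⟨⋃ s ∈ S, (F s ∪ F s⁻¹), S.finite_toSet.biUnion fun s _ => (hF s).union (hF _), ?_⟩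
  intro h hh
  induction hh using Subgroup.closure_induction'' with
  | one => intro p g h; right; simpa using h
  | mem s hsS =>
    intro p g h
    rcases hs _ _ _ h with h | h
    · exact Or.inl ⟨1, one_mem _, Set.mem_biUnion hsS (Or.inl (by simpa using h))⟩
    · exact Or.inr h
  | inv_mem s hsS =>
    intro p g h
    rcases hs _ _ _ h with h | h
    · exact Or.inl ⟨1, one_mem _, Set.mem_biUnion hsS (Or.inr (by simpa using h))⟩
    · exact Or.inr h
  | mul x y hx hy ihx ihy =>
    intro p g h
    rw [mul_assoc] at h
    rcases ihx _ _ h with h | h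
    · exact Or.inl h
    rcases ihy _ _ h with ⟨k, hk, h⟩ | h
    · exact Or.inl ⟨k * x⁻¹, mul_mem hk (inv_mem hx), by simpa [mul_assoc] using h⟩
    · right
      simpa [mul_assoc] using h

theorem exists_start [Nontrivial ι] [∀ i, Nontrivial (M i)] (N : Subgroup (CoprodI M))
    (hN : N.Normal) (hNbot : N ≠ ⊥) (i : ι) :
    ∃ (x : Σ i, M i) (l : List (Σ i, M i)), Red (x :: l) ∧ x.1 ≠ i ∧ lp (x :: l) ∈ N := by
  obtain ⟨n, hn, hn1⟩ := (Subgroup.bot_or_exists_ne_one N).resolve_left hNbot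
  obtain ⟨l, hl, hln⟩ := exists_red n
  rw [← hln] at hn hn1
  clear hln
  cases l with
  | nil => simp at hn1
  | cons a t =>
  by_cases hai : a.1 = i
  swap
  · exact ⟨a, t, hl, hai, hn⟩
  obtain ⟨l', z, hz⟩ : ∃ l' z, a :: t = l' ++ [z] :=
    ⟨_, _, (List.dropLast_append_getLast (List.cons_ne_nil a t)).symm⟩
  by_cases hzi : z.1 = i
  · obtain ⟨j, hj⟩ := exists_ne i
    obtain ⟨b, hb⟩ := exists_ne (1 : M j)
    refine ⟨⟨j, b⟩, (a :: t) ++ [⟨j, b⁻¹⟩], ⟨?_, ?_⟩, hj, ?_⟩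
    · intro y hy
      have := hl.1 y
      simp only [List.cons_append, List.mem_cons, List.mem_append, List.not_mem_nil,
        or_false] at hy this
      rcases hy with rfl | hy | hy | rfl
      · exact hb
      · exact this (Or.inl hy)
      · exact this (Or.inr hy)
      · simpa using hb
    · rw [List.cons_append, List.isChain_cons_cons, ← List.cons_append, List.isChain_append]
      refine ⟨by rw [hai]; exact hj, hl.2, by simp, ?_⟩
      rw [hz]
      simp [hzi, hj.symm]
    · have := hN.conj_mem _ hn (CoprodI.of b)
      simpa [mul_assoc] using this
  · refine ⟨z, l', ⟨?_, ?_⟩, hzi, ?_⟩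
    · intro y hy
      apply hl.1 y
      rw [hz]
      simp at hy ⊢
      tauto
    · have h2 := hl.2
      rw [hz] at h2
      rw [List.isChain_cons]
      refine ⟨?_, (List.isChain_append.1 h2).1⟩
      intro y hy
      cases l' with
      | nil => simp at hy
      | cons c l' =>
        simp at hz hy
        rw [← hy, ← hz.1, hai]
        exact hzi
    · rw [hz] at hn
      have := hN.conj_mem _ hn (CoprodI.of z.2)
      simpa [mul_assoc] using this

theorem main [Nontrivial ι] [∀ i, Nontrivial (M i)] (H : Subgroup (CoprodI M)) (hH : H.FG)
    (N : Subgroup (CoprodI M)) (hN : N.Normal) (hNbot : N ≠ ⊥) (hNH : N ≤ H) :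
    H.FiniteIndex := by
  obtain ⟨F, hF, hFH⟩ := isPre_subgroup H hH
  have key : ∀ n : ℕ, ∀ l : List (Σ i, M i), l.length = n → Red l → ∃ k ∈ H, k * lp l ∈ F := by
    intro n
    induction n using Nat.strong_induction_on with
    | _ n ih =>
    intro l hln hl
    obtain ⟨x, t, hxt, hx, hw⟩ : ∃ (x : Σ i, M i) (t : List (Σ i, M i)), Red (x :: t) ∧
        (∀ y ∈ l.getLast?, y.1 ≠ x.1) ∧ lp (x :: t) ∈ N := by
      rcases h : l.getLast? with _ | y
      · obtain ⟨i⟩ := (inferInstance : Nonempty ι)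
        obtain ⟨x, t, h1, h2, h3⟩ := exists_start N hN hNbot i
        exact ⟨x, t, h1, by simp, h3⟩
      · obtain ⟨x, t, h1, h2, h3⟩ := exists_start N hN hNbot y.1
        exact ⟨x, t, h1, by simpa using h2.symm, h3⟩
    have hred : Red (l ++ (x :: t)) := by
      refine ⟨?_, ?_⟩
      · intro y hy
        rcases List.mem_append.1 hy with hy | hy
        · exact hl.1 y hy
        · exact hxt.1 y hy
      · rw [List.isChain_append]
        refine ⟨hl.2, hxt.2, ?_⟩
        intro y hy z hz
        simp at hz
        rw [← hz]
        exact hx y hy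
    have hpre : IsPre (lp l) ((lp l * lp (x :: t) * (lp l)⁻¹) * lp l) :=
      ⟨l, x :: t, hred, rfl, by simp⟩
    rcases hFH _ (hNH (hN.conj_mem _ hw (lp l))) _ _ hpre with h | h
    · exact h
    obtain ⟨l₁, l₂, hr, h1, h2⟩ := h
    have hll := red_inj hr hl h2
    have hl1 : Red l₁ := by
      refine ⟨fun y hy => hr.1 y (by simp [hy]), (List.isChain_append.1 hr.2).1⟩
    have hlt : l₁.length < n := by
      rw [← hln, ← hll, List.length_append]
      rcases l₂ with _ | ⟨c, l₂⟩
      · exfalso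
        rw [List.append_nil] at hll
        rw [hll] at h1
        have h1' : lp (x :: t) = lp ([] : List (Σ i, M i)) := by
          have : lp l * lp (x :: t) * (lp l)⁻¹ = 1 := by
            simpa only [right_eq_mul, left_eq_mul, mul_eq_right, inv_eq_one] using h1.symm
          rw [lp_nil]
          exact (conj_eq_one_iff).1 this
        have := red_inj hxt ⟨by simp, by simp⟩ h1'
        simp at this
      · simp
    obtain ⟨k, hk, hkF⟩ := ih _ hlt l₁ rfl hl1
    rw [h1] at hkF
    exact ⟨k * (lp l * lp (x :: t) * (lp l)⁻¹)⁻¹,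
      mul_mem hk (inv_mem (hNH (hN.conj_mem _ hw (lp l)))), by rwa [mul_assoc]⟩
  rw [Subgroup.finiteIndex_iff_finite_quotient]
  have : Finite F := hF
  refine Finite.of_surjective (fun f : F => (QuotientGroup.mk ((f : CoprodI M)⁻¹) : _ ⧸ H)) ?_
  intro q
  obtain ⟨g, rfl⟩ := QuotientGroup.mk_surjective q
  obtain ⟨l, hl, hlg⟩ := exists_red g⁻¹
  obtain ⟨k, hk, hkF⟩ := key _ l rfl hl
  refine ⟨⟨_, hkF⟩, ?_⟩
  rw [QuotientGroup.eq]
  simpa [hlg] using hk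

end

section
universe u v
variable (A : Type u) (B : Type v) [Group A] [Group B]

/-- The two factors, as a family indexed by `Bool`. -/
def Fam : Bool → Type (max u v)
  | true => ULift.{v} A
  | false => ULift.{u} B

instance : ∀ b, Group (Fam A B b)
  | true => inferInstanceAs (Group (ULift.{v} A))
  | false => inferInstanceAs (Group (ULift.{u} B))

instance [Nontrivial A] [Nontrivial B] : ∀ b, Nontrivial (Fam A B b)
  | true => inferInstanceAs (Nontrivial (ULift.{v} A))
  | false => inferInstanceAs (Nontrivial (ULift.{u} B))

/-- Inclusion of the first factor. -/
def toA : A ≃* Fam A B true := MulEquiv.ulift.symm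

/-- Inclusion of the second factor. -/
def toB : B ≃* Fam A B false := MulEquiv.ulift.symm

/-- The maps of the family into the binary free product. -/
def famHom : ∀ b, Fam A B b →* A ∗ B
  | true => Coprod.inl.comp (toA A B).symm.toMonoidHom
  | false => Coprod.inr.comp (toB A B).symm.toMonoidHom

/-- The binary free product as an indexed one. -/
def toI : A ∗ B ≃* CoprodI (Fam A B) :=
  MonoidHom.toMulEquiv
    (Coprod.lift (CoprodI.of.comp (toA A B).toMonoidHom) (CoprodI.of.comp (toB A B).toMonoidHom))
    (CoprodI.lift (famHom A B))
    (by
      apply Coprod.hom_ext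
      · ext x; simp [famHom]
      · ext x; simp [famHom])
    (by
      apply CoprodI.ext_hom
      rintro (_ | _)
      · ext x; simp [famHom]
      · ext x; simp [famHom])

end

end BaumslagAux

/-- B. Baumslag's theorem: if `G = A * B` is a free product of two nontrivial groups
and `H ≤ G` is a finitely generated subgroup containing a nontrivial normal subgroup
of `G`, then `H` has finite index in `G`. -/
theorem stmt9 {A B : Type*} [Group A] [Group B] [Nontrivial A] [Nontrivial B]
    (H : Subgroup (A ∗ B)) (hH : H.FG)
    (N : Subgroup (A ∗ B)) (hN : N.Normal) (hNbot : N ≠ ⊥) (hNH : N ≤ H) :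
    H.FiniteIndex := by
  let e := BaumslagAux.toI A B
  have hFG : (H.map (e : A ∗ B →* Monoid.CoprodI (BaumslagAux.Fam A B))).FG := by
    classical
    obtain ⟨S, rfl⟩ := hH
    exact ⟨S.image e, by rw [MonoidHom.map_closure]; simp⟩
  have hbot : N.map (e : A ∗ B →* Monoid.CoprodI (BaumslagAux.Fam A B)) ≠ ⊥ := fun h =>
    hNbot ((Subgroup.map_eq_bot_iff_of_injective N e.injective).1 h)
  have h := BaumslagAux.main _ hFG _ (hN.map _ e.surjective) hbot (Subgroup.map_mono hNH)
  rw [Subgroup.finiteIndex_iff] at h ⊢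
  rwa [Subgroup.index_map_equiv] at h
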